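/- Let n be an even integer with n ≥ 6 and let f : F → 𝔽₂ be defined by f(x) = tr(x^{15}). Then nl₃(f) ≥ 2^{n−1} − (1/2)·√((2^n − 1)·√((1/3)·2^{3n/2 + 4} + (7/3)·2^{n+1} − (1/3)·2^{n/2 + 5}) + 2^n). -/

import Mathlib

noncomputable section

/-- `Fq n` is the finite field with `2 ^ n` elements. -/
abbrev Fq (n : ℕ) : Type := GaloisField 2 n

/-- The absolute trace map `tr x = x + x^2 + x^4 + ⋯ + x^(2^(n-1))` from `Fq n` to `𝔽₂`. -/
def tr {n : ℕ} (x : Fq n) : ZMod 2 := Algebra.trace (ZMod 2) (Fq n) x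

/-- The derivative of `f` with respect to `a`. -/
def der {n : ℕ} (f : Fq n → ZMod 2) (a : Fq n) : Fq n → ZMod 2 :=
  fun x => f x + f (x + a)

/-- Iterated derivatives along a list of directions (head applied last/outermost). -/
def derIter {n : ℕ} (f : Fq n → ZMod 2) : List (Fq n) → (Fq n → ZMod 2)
  | [] => f
  | a :: as => der (derIter f as) a

/-- `g` has algebraic degree at most `r`: all `(r+1)`-th order derivatives vanish. -/
def degLE {n : ℕ} (g : Fq n → ZMod 2) (r : ℕ) : Prop :=
  ∀ l : List (Fq n), l.length = r + 1 → derIter g l = fun _ => 0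

/-- Hamming distance between two Boolean functions on `Fq n`. -/
def hdist {n : ℕ} (f g : Fq n → ZMod 2) : ℕ :=
  {x : Fq n | f x ≠ g x}.ncard

/-- The `r`-th order nonlinearity of `f`. -/
def nl {n : ℕ} (r : ℕ) (f : Fq n → ZMod 2) : ℕ :=
  sInf {d : ℕ | ∃ g : Fq n → ZMod 2, degLE g r ∧ d = hdist f g}

/-- The linear kernel of `f`: directions along which the derivative is constant. -/
def linKer {n : ℕ} (f : Fq n → ZMod 2) : Set (Fq n) :=
  {b | ∃ c : ZMod 2, ∀ x, der f b x = c}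

/-- The weight of a Boolean function on `Fq n`. -/
def wt {n : ℕ} (f : Fq n → ZMod 2) : ℕ := {x : Fq n | f x = 1}.ncard


section helpers

variable {n : ℕ}

instance : Fintype (Fq n) := Fintype.ofFinite _
instance : DecidableEq (Fq n) := Classical.decEq _

/-- The sign character. -/
def sgn (z : ZMod 2) : ℝ := if z = 0 then 1 else -1

lemma sgn_add (a b : ZMod 2) : sgn (a + b) = sgn a * sgn b := by
  revert a b
  have h : ∀ a : ZMod 2, a = 0 ∨ a = 1 := by decide
  have h2 : (1 + 1 : ZMod 2) = 0 := by decide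
  intro a b
  rcases h a with rfl | rfl <;> rcases h b with rfl | rfl <;> simp [sgn, h2]

lemma sgn_abs (a : ZMod 2) : |sgn a| = 1 := by
  unfold sgn; split_ifs <;> simp

/-- The character sum. -/
def cs (h : Fq n → ZMod 2) : ℝ := ∑ x, sgn (h x)

lemma cs_sq (h : Fq n → ZMod 2) : cs h ^ 2 = ∑ a, cs (der h a) := by
  have : ∀ x, ∑ y, sgn (h x) * sgn (h y) = ∑ a, sgn (h x) * sgn (h (x + a)) := by
    intro x
    exact (Equiv.sum_comp (Equiv.addLeft x) (fun y => sgn (h x) * sgn (h y))).symm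
  unfold cs der
  rw [sq, Finset.sum_mul_sum]
  simp_rw [this, sgn_add]
  rw [Finset.sum_comm]

lemma cs_abs_le (h : Fq n → ZMod 2) : |cs h| ≤ Fintype.card (Fq n) := by
  unfold cs
  refine (Finset.abs_sum_le_sum_abs _ _).trans ?_
  simp [sgn_abs]

lemma cs_zero (h : Fq n → ZMod 2) (d : Fq n) (hd : ∀ x, der h d x = 1) : cs h = 0 := by
  have h1 : ∑ x, sgn (h (x + d)) = cs h :=
    Equiv.sum_comp (Equiv.addRight d) (fun y => sgn (h y))
  have h2 : ∀ x, sgn (h (x + d)) = - sgn (h x) := by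
    intro x
    have h3 := hd x
    have h4 : sgn (h x) * sgn (h (x + d)) = -1 := by
      rw [← sgn_add]; unfold der at h3; rw [h3]; simp [sgn]
    have h5 : sgn (h x) * sgn (h x) = 1 := by unfold sgn; split_ifs <;> simp
    linear_combination (- sgn (h (x + d))) * h5 + sgn (h x) * h4
  simp_rw [h2] at h1
  rw [Finset.sum_neg_distrib] at h1
  unfold cs at *
  linarith

lemma cs_sq_le (h : Fq n → ZMod 2) (K : Finset (Fq n)) (hK : ∀ c, c ∉ K → cs (der h c) = 0) :
    cs h ^ 2 ≤ K.card * Fintype.card (Fq n) := by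
  rw [cs_sq, ← Finset.sum_subset (Finset.subset_univ K) (fun c _ hc => hK c hc)]
  refine (Finset.sum_le_card_nsmul K _ (Fintype.card (Fq n) : ℝ)
    (fun c _ => (le_abs_self _).trans (cs_abs_le _))).trans ?_
  simp

lemma two_zero : (2 : Fq n) = 0 := CharTwo.two_eq_zero

lemma tr_add (x y : Fq n) : tr (x + y) = tr x + tr y := by simp [tr]

lemma tr_sq (x : Fq n) : tr (x ^ 2) = tr x := by
  have := Algebra.trace_eq_of_algEquiv (FiniteField.frobeniusAlgEquivOfAlgebraic (ZMod 2) (Fq n)) x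
  simpa [tr] using this

lemma tr_nondeg (a : Fq n) (h : ∀ x, tr (a * x) = 0) : a = 0 := by
  refine (traceForm_nondegenerate (ZMod 2) (Fq n)).1 a (fun x => ?_)
  simpa [tr, Algebra.traceForm_apply] using h x

lemma sq_surj (y : Fq n) : ∃ x : Fq n, x ^ 2 = y := by
  obtain ⟨x, hx⟩ := (FiniteField.frobeniusAlgEquivOfAlgebraic (ZMod 2) (Fq n)).surjective y
  exact ⟨x, by simpa using hx⟩

/-- The Moore form. -/
def moore (a b c x : Fq n) : Fq n :=
  (a*b^2+a^2*b)*(c^4*x^8+c^8*x^4) + (a*b^4+a^4*b)*(c^2*x^8+c^8*x^2)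
  + (a*b^8+a^8*b)*(c^2*x^4+c^4*x^2) + (a^2*b^4+a^4*b^2)*(c*x^8+c^8*x)
  + (a^2*b^8+a^8*b^2)*(c*x^4+c^4*x) + (a^4*b^8+a^8*b^4)*(c*x^2+c^2*x)

lemma moore_scale (a b c x : Fq n) : moore a (a*b) (a*c) (a*x) = a^15 * moore 1 b c x := by
  unfold moore; ring

lemma moore_fact (b c x : Fq n) : moore 1 b c x = (b^2+b) *
   ((c^4+(b^2+b+1)*c^2+(b^2+b)*c)*(x^4+(b^2+b+1)*x^2+(b^2+b)*x)^2
    + (c^4+(b^2+b+1)*c^2+(b^2+b)*c)^2*(x^4+(b^2+b+1)*x^2+(b^2+b)*x)) := by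
  unfold moore
  have h := two_zero (n := n)
  linear_combination ((-1)*b^1*c^2*x^6 + (-1)*b^1*c^4*x^4 + (-1)*b^1*c^4*x^6 + (-1)*b^1*c^6*x^2 +
    (-1)*b^1*c^6*x^4 + (-1)*b^2*c^1*x^6 + (-1)*b^2*c^2*x^3 + (-2)*b^2*c^2*x^4 +
    (-1)*b^2*c^2*x^5 + (-3)*b^2*c^2*x^6 + (-1)*b^2*c^2*x^8 + (-1)*b^2*c^3*x^2 +
    (-1)*b^2*c^3*x^4 + (-2)*b^2*c^4*x^2 + (-1)*b^2*c^4*x^3 + (-3)*b^2*c^4*x^4 +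
    (-1)*b^2*c^4*x^5 + (-2)*b^2*c^4*x^6 + (-1)*b^2*c^5*x^2 + (-1)*b^2*c^5*x^4 +
    (-1)*b^2*c^6*x^1 + (-3)*b^2*c^6*x^2 + (-2)*b^2*c^6*x^4 + (-1)*b^2*c^8*x^2 +
    (-1)*b^3*c^1*x^3 + (-2)*b^3*c^1*x^4 + (-1)*b^3*c^1*x^5 + (-3)*b^3*c^1*x^6 +
    (-1)*b^3*c^1*x^8 + (-1)*b^3*c^2*x^2 + (-4)*b^3*c^2*x^3 + (-5)*b^3*c^2*x^4 +
    (-3)*b^3*c^2*x^5 + (-5)*b^3*c^2*x^6 + (-1)*b^3*c^2*x^8 + (-1)*b^3*c^3*x^1 +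
    (-4)*b^3*c^3*x^2 + (-3)*b^3*c^3*x^4 + (-2)*b^3*c^4*x^1 + (-5)*b^3*c^4*x^2 +
    (-3)*b^3*c^4*x^3 + (-5)*b^3*c^4*x^4 + (-2)*b^3*c^4*x^5 + (-2)*b^3*c^4*x^6 +
    (-1)*b^3*c^5*x^1 + (-3)*b^3*c^5*x^2 + (-2)*b^3*c^5*x^4 + (-3)*b^3*c^6*x^1 +
    (-5)*b^3*c^6*x^2 + (-2)*b^3*c^6*x^4 + (-1)*b^3*c^8*x^1 + (-1)*b^3*c^8*x^2 +
    (-4)*b^4*c^1*x^3 + (-4)*b^4*c^1*x^4 + (-3)*b^4*c^1*x^5 + (-4)*b^4*c^1*x^6 +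
    (-4)*b^4*c^2*x^2 + (-8)*b^4*c^2*x^3 + (-8)*b^4*c^2*x^4 + (-4)*b^4*c^2*x^5 +
    (-5)*b^4*c^2*x^6 + (-4)*b^4*c^3*x^1 + (-8)*b^4*c^3*x^2 + (-4)*b^4*c^3*x^4 +
    (-4)*b^4*c^4*x^1 + (-8)*b^4*c^4*x^2 + (-4)*b^4*c^4*x^3 + (-5)*b^4*c^4*x^4 +
    (-1)*b^4*c^4*x^5 + (-1)*b^4*c^4*x^6 + (-3)*b^4*c^5*x^1 + (-4)*b^4*c^5*x^2 +
    (-1)*b^4*c^5*x^4 + (-4)*b^4*c^6*x^1 + (-5)*b^4*c^6*x^2 + (-1)*b^4*c^6*x^4 +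
    (-2)*b^5*c^1*x^2 + (-7)*b^5*c^1*x^3 + (-5)*b^5*c^1*x^4 + (-3)*b^5*c^1*x^5 +
    (-3)*b^5*c^1*x^6 + (-2)*b^5*c^2*x^1 + (-7)*b^5*c^2*x^2 + (-10)*b^5*c^2*x^3 +
    (-8)*b^5*c^2*x^4 + (-3)*b^5*c^2*x^5 + (-3)*b^5*c^2*x^6 + (-7)*b^5*c^3*x^1 +
    (-10)*b^5*c^3*x^2 + (-3)*b^5*c^3*x^4 + (-5)*b^5*c^4*x^1 + (-8)*b^5*c^4*x^2 +
    (-3)*b^5*c^4*x^3 + (-3)*b^5*c^4*x^4 + (-3)*b^5*c^5*x^1 + (-3)*b^5*c^5*x^2 +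
    (-3)*b^5*c^6*x^1 + (-3)*b^5*c^6*x^2 + (-3)*b^6*c^1*x^2 + (-7)*b^6*c^1*x^3 +
    (-4)*b^6*c^1*x^4 + (-1)*b^6*c^1*x^5 + (-1)*b^6*c^1*x^6 + (-3)*b^6*c^2*x^1 +
    (-7)*b^6*c^2*x^2 + (-8)*b^6*c^2*x^3 + (-5)*b^6*c^2*x^4 + (-1)*b^6*c^2*x^5 +
    (-1)*b^6*c^2*x^6 + (-7)*b^6*c^3*x^1 + (-8)*b^6*c^3*x^2 + (-1)*b^6*c^3*x^4 +
    (-4)*b^6*c^4*x^1 + (-5)*b^6*c^4*x^2 + (-1)*b^6*c^4*x^3 + (-1)*b^6*c^4*x^4 +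
    (-1)*b^6*c^5*x^1 + (-1)*b^6*c^5*x^2 + (-1)*b^6*c^6*x^1 + (-1)*b^6*c^6*x^2 +
    (-2)*b^7*c^1*x^2 + (-4)*b^7*c^1*x^3 + (-2)*b^7*c^1*x^4 + (-2)*b^7*c^2*x^1 +
    (-4)*b^7*c^2*x^2 + (-4)*b^7*c^2*x^3 + (-2)*b^7*c^2*x^4 + (-4)*b^7*c^3*x^1 +
    (-4)*b^7*c^3*x^2 + (-2)*b^7*c^4*x^1 + (-2)*b^7*c^4*x^2 + (-1)*b^8*c^1*x^3 +
    (-1)*b^8*c^2*x^2 + (-1)*b^8*c^2*x^3 + (-1)*b^8*c^3*x^1 + (-1)*b^8*c^3*x^2) * h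

lemma diff4 {R : Type*} [CommRing R] (x y z w a1 a2 a3 a4 b1 b2 b3 b4 c1 c2 c3 c4 d1 d2 d3 d4 : R) :
   (let P := fun x y z w : R => x*y*z*w
    let D := fun (p1 p2 p3 p4 : R) (f : R → R → R → R → R) => fun x y z w : R => 
      f x y z w - f (x+p1) (y+p2) (z+p3) (w+p4)
    D d1 d2 d3 d4 (D c1 c2 c3 c4 (D b1 b2 b3 b4 (D a1 a2 a3 a4 P))) x y z w) =
   (a1*b2+a2*b1)*(c3*d4+c4*d3) + (a1*b3+a3*b1)*(c2*d4+c4*d2)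
  + (a1*b4+a4*b1)*(c2*d3+c3*d2) + (a2*b3+a3*b2)*(c1*d4+c4*d1)
  + (a2*b4+a4*b2)*(c1*d3+c3*d1) + (a3*b4+a4*b3)*(c1*d2+c2*d1) := by
  dsimp only
  ring

lemma der4 (a b c d x : Fq n) :
    der (der (der (der (fun x => tr (x ^ 15)) a) b) c) d x = tr (moore a b c d) := by
  have hs : ∀ x y : Fq n, x - y = x + y := fun x y => by
    linear_combination (-y) * two_zero (n := n)
  have h2 : ∀ x y : Fq n, (x + y) ^ 2 = x ^ 2 + y ^ 2 := fun x y => by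
    linear_combination (x * y) * two_zero (n := n)
  have h4 : ∀ x y : Fq n, (x + y) ^ 4 = x ^ 4 + y ^ 4 := fun x y => by
    rw [show 4 = 2 * 2 by norm_num, pow_mul, h2, h2]; ring
  have h8 : ∀ x y : Fq n, (x + y) ^ 8 = x ^ 8 + y ^ 8 := fun x y => by
    rw [show 8 = 4 * 2 by norm_num, pow_mul, h4, h2]; ring
  have key := diff4 x (x^2) (x^4) (x^8) a (a^2) (a^4) (a^8) b (b^2) (b^4) (b^8)
    c (c^2) (c^4) (c^8) d (d^2) (d^4) (d^8)
  have h15 : ∀ x : Fq n, x ^ 15 = x * x ^ 2 * x ^ 4 * x ^ 8 := fun x => by ring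
  unfold moore
  rw [← key]
  simp only [der, ← tr_add]
  congr 1
  simp only [h15, h2, h4, h8, hs]

lemma tr_moore (m b c : Fq n) (h : ∀ x, tr (m * moore 1 b c x) = 0) (B p W T : Fq n)
    (hB : B = b ^ 2 + b) (hp : p = c ^ 4 + (B + 1) * c ^ 2 + B * c)
    (hW : W = (m * B) * p + (m * B) ^ 2 * p ^ 4) (hT : T = W + W ^ 2 * B ^ 4) :
    T + T ^ 2 = 0 := by
  have h2 : ∀ x y : Fq n, (x + y) ^ 2 = x ^ 2 + y ^ 2 := fun x y => by
    linear_combination (x * y) * two_zero (n := n)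
  apply tr_nondeg
  intro z
  obtain ⟨z1, rfl⟩ := sq_surj z
  obtain ⟨z2, rfl⟩ := sq_surj z1
  obtain ⟨x, rfl⟩ := sq_surj z2
  have h1 := h x
  rw [moore_fact, ← hB, ← hp] at h1
  set v := x ^ 4 + (B + 1) * x ^ 2 + B * x with hv
  have e1 : m * (B * (p * v ^ 2 + p ^ 2 * v)) = m * B * p * v ^ 2 + m * B * p ^ 2 * v := by ring
  rw [e1, tr_add, ← tr_sq (m * B * p ^ 2 * v), ← tr_add] at h1
  have e2 : m * B * p * v ^ 2 + (m * B * p ^ 2 * v) ^ 2 = W * v ^ 2 := by rw [hW]; ring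
  have e3 : v ^ 2 = x ^ 8 + (B ^ 2 + 1) * x ^ 4 + B ^ 2 * x ^ 2 := by
    rw [hv, h2, h2, mul_pow, mul_pow, h2]; ring
  have e4 : W * v ^ 2 = W * x ^ 8 + W * (B ^ 2 + 1) * x ^ 4 + W * B ^ 2 * x ^ 2 := by
    rw [e3]; ring
  rw [e2, e4, tr_add, tr_add, ← tr_sq (W * (B ^ 2 + 1) * x ^ 4), ← tr_sq (W * B ^ 2 * x ^ 2),
    ← tr_sq ((W * B ^ 2 * x ^ 2) ^ 2), ← tr_add, ← tr_add] at h1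
  rw [← h1]
  congr 1
  have e5 : T ^ 2 = W ^ 2 + W ^ 4 * B ^ 8 := by rw [hT, h2]; ring
  have e6 : (W * (B ^ 2 + 1) * x ^ 4) ^ 2 = W ^ 2 * (B ^ 4 + 1) * x ^ 8 := by
    rw [mul_pow, mul_pow, h2]; ring
  rw [e5, e6, hT]; ring

lemma card_roots_le (P : Polynomial (Fq n)) (k : ℕ) (hP : P ≠ 0) (hk : P.natDegree ≤ k) :
    (Finset.univ.filter (fun x => P.eval x = 0)).card ≤ k := by
  have : Finset.univ.filter (fun x => P.eval x = 0) ⊆ P.roots.toFinset := by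
    intro x hx
    simp at hx
    simp [hP, hx]
  exact (Finset.card_le_card this).trans
    ((Multiset.toFinset_card_le _).trans (P.card_roots'.trans hk))

open Polynomial in
lemma fib4 (e4 e2 e1 y : Fq n) (h : e4 ≠ 0) :
    (Finset.univ.filter (fun x => e4 * x ^ 4 + e2 * x ^ 2 + e1 * x = y)).card ≤ 4 := by
  have := card_roots_le (C e4 * X ^ 4 + C e2 * X ^ 2 + C e1 * X - C y) 4
    (fun h0 => h (by simpa [coeff_X, coeff_C] using congrArg (fun P => P.coeff 4) h0))
    (by compute_degree)
  simpa [sub_eq_zero] using this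

open Polynomial in
lemma fib2 (e2 e1 y : Fq n) (h : e2 ≠ 0) :
    (Finset.univ.filter (fun x => e2 * x ^ 2 + e1 * x = y)).card ≤ 2 := by
  have := card_roots_le (C e2 * X ^ 2 + C e1 * X - C y) 2
    (fun h0 => h (by simpa [coeff_X, coeff_C] using congrArg (fun P => P.coeff 2) h0))
    (by compute_degree)
  simpa [sub_eq_zero] using this

lemma fib_count (φ : Fq n → Fq n) (k : ℕ) (S : Finset (Fq n))
    (h : ∀ y, (Finset.univ.filter (fun x => φ x = y)).card ≤ k) :
    (Finset.univ.filter (fun x => φ x ∈ S)).card ≤ k * S.card := by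
  refine Finset.card_le_mul_card_image_of_maps_to (f := φ) (fun x hx => by simpa using hx) k ?_
  intro y _
  refine (Finset.card_le_card ?_).trans (h y)
  intro x hx
  simp at hx ⊢
  exact hx.2

lemma ker_count (m b : Fq n) (hB : b ^ 2 + b ≠ 0) (k : ℕ)
    (hk : ∀ y, (Finset.univ.filter (fun p : Fq n =>
      (m * (b^2+b)) * p + (m * (b^2+b)) ^ 2 * p ^ 4 = y)).card ≤ k) :
    (Finset.univ.filter (fun c => ∀ x, tr (m * moore 1 b c x) = 0)).card ≤ 16 * k := by
  set B := b ^ 2 + b with hBd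
  set S0 := Finset.univ.filter (fun T : Fq n => T + T ^ 2 = 0) with hS0
  set S1 := Finset.univ.filter (fun W : Fq n => W + W ^ 2 * B ^ 4 ∈ S0) with hS1
  set S2 := Finset.univ.filter (fun p : Fq n => (m * B) * p + (m * B) ^ 2 * p ^ 4 ∈ S1) with hS2
  set S3 := Finset.univ.filter (fun c : Fq n => c ^ 4 + (B + 1) * c ^ 2 + B * c ∈ S2) with hS3
  have c0 : S0.card ≤ 2 := by
    have := fib2 (1 : Fq n) 1 0 one_ne_zero
    simpa [hS0, add_comm] using this
  have c1 : S1.card ≤ 2 * S0.card := by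
    refine fib_count _ _ _ (fun y => ?_)
    have := fib2 (B ^ 4) 1 y (pow_ne_zero _ hB)
    simpa [add_comm, mul_comm] using this
  have c2 : S2.card ≤ k * S1.card := fib_count _ _ _ hk
  have c3 : S3.card ≤ 4 * S2.card := by
    refine fib_count _ _ _ (fun y => ?_)
    have := fib4 (1 : Fq n) (B + 1) B y one_ne_zero
    simpa using this
  have hsub : (Finset.univ.filter (fun c => ∀ x, tr (m * moore 1 b c x) = 0)) ⊆ S3 := by
    intro c hc
    simp only [Finset.mem_filter, Finset.mem_univ, true_and, hS3, hS2, hS1, hS0] at hc ⊢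
    exact tr_moore m b c hc B _ _ _ hBd rfl rfl rfl
  have := Finset.card_le_card hsub
  have h5 : k * S1.card ≤ k * 4 := Nat.mul_le_mul_left _ (by omega)
  omega

lemma ker_count64 (m b : Fq n) (hm : m ≠ 0) (hB : b ^ 2 + b ≠ 0) :
    (Finset.univ.filter (fun c => ∀ x, tr (m * moore 1 b c x) = 0)).card ≤ 64 := by
  refine ker_count m b hB 4 (fun y => ?_)
  have := fib4 ((m * (b^2+b))^2) 0 (m * (b^2+b)) y (pow_ne_zero _ (mul_ne_zero hm hB))
  simpa [add_comm] using this

lemma ker_count16 (m b : Fq n) (hm : m ≠ 0) (hB : b ^ 2 + b ≠ 0)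
    (hc : ¬ ∃ y : Fq n, y ^ 3 = m * (b ^ 2 + b)) :
    (Finset.univ.filter (fun c => ∀ x, tr (m * moore 1 b c x) = 0)).card ≤ 16 := by
  refine ker_count m b hB 1 (fun y => ?_)
  rw [Finset.card_le_one]
  intro p hp r hr
  simp only [Finset.mem_filter, Finset.mem_univ, true_and] at hp hr
  set μ := m * (b ^ 2 + b) with hμ
  have hμ0 : μ ≠ 0 := mul_ne_zero hm hB
  by_contra hne
  have he : p - r ≠ 0 := sub_ne_zero.mpr hne
  apply hc
  have h0 : (μ * (p - r)) * (1 + μ * (p - r) ^ 3) = 0 := by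
    linear_combination hp - hr + μ ^ 2 * (-2*p^3*r+3*p^2*r^2-2*p*r^3+r^4) * two_zero (n := n)
  have h1 : 1 + μ * (p - r) ^ 3 = 0 := by
    rcases mul_eq_zero.mp h0 with h | h
    · exact absurd h (mul_ne_zero hμ0 he)
    · exact h
  refine ⟨(p - r)⁻¹, ?_⟩
  have h2 : μ * (p - r) ^ 3 = 1 := by linear_combination h1 - two_zero (n := n)
  rw [inv_pow]
  exact (eq_inv_of_mul_eq_one_left h2).symm

/-- The number of `b` outside `{0,1}` with `b^2+b` a cube. -/
def cubeSet (n : ℕ) : Finset (Fq n) :=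
  Finset.univ.filter (fun b => b ^ 2 + b ≠ 0 ∧ ∃ y : Fq n, y ^ 3 = b ^ 2 + b)

lemma cs_cube_sq : cs (fun y : Fq n => tr (y ^ 3)) ^ 2 ≤ 4 * Fintype.card (Fq n) := by
  set K := Finset.univ.filter (fun d : Fq n => d ^ 4 + d = 0) with hK
  have hc : (K.card : ℝ) ≤ 4 := by
    have := fib4 (1 : Fq n) 0 1 0 one_ne_zero
    have h2 : K.card ≤ 4 := by simpa [hK] using this
    exact_mod_cast h2
  refine (cs_sq_le _ K ?_).trans (by gcongr)
  intro d hd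
  have h1 : ¬ ∀ x, tr ((d ^ 4 + d) * x) = 0 := fun h => hd (by simp [hK, tr_nondeg _ h])
  push Not at h1
  obtain ⟨z, hz⟩ := h1
  obtain ⟨x, rfl⟩ := sq_surj z
  have h01 : ∀ a : ZMod 2, a ≠ 0 → a = 1 := by decide
  refine cs_zero _ x (fun y => ?_)
  rw [← h01 _ hz]
  have e1 : (d ^ 4 + d) * x ^ 2 = (d ^ 2 * x) ^ 2 + d * x ^ 2 := by ring
  rw [e1, tr_add, tr_sq, ← tr_add]
  simp only [der, ← tr_add]
  congr 1
  linear_combination (2*y^3 + 3*y^2*x+3*y^2*d + 3*y*x*d+d^3+3*y*d^2+3*y*x^2+x^3+d^2*x+d*x^2) * two_zero (n := n)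


lemma card_Fq (hn : n ≠ 0) : Fintype.card (Fq n) = 2 ^ n := by
  rw [← Nat.card_eq_fintype_card, GaloisField.card 2 n hn]

lemma exists_omega (hn : n ≠ 0) (hev : Even n) : ∃ w : Fq n, w ≠ 1 ∧ w ^ 3 = 1 := by
  have hd : 3 ∣ Fintype.card (Fq n)ˣ := by
    rw [Fintype.card_units, card_Fq hn]
    obtain ⟨k, rfl⟩ := hev
    rw [← two_mul, pow_mul]
    have h := Nat.sub_dvd_pow_sub_pow (2 ^ 2) 1 k
    rw [one_pow] at h
    exact h
  have : Fact (Nat.Prime 3) := ⟨Nat.prime_three⟩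
  obtain ⟨w, hw⟩ := exists_prime_orderOf_dvd_card 3 hd
  refine ⟨w, ?_, ?_⟩
  · intro h
    have : w = 1 := Units.ext h
    rw [this] at hw
    simp at hw
  · have := pow_orderOf_eq_one w
    rw [hw] at this
    have h := congrArg Units.val this
    rw [Units.val_pow_eq_pow_val] at h
    exact h

lemma fib_tr (z : Fq n) :
    ((Finset.univ.filter (fun b : Fq n => b ^ 2 + b = z)).card : ℝ) ≤ 1 + sgn (tr z) := by
  by_cases h : tr z = 0
  · have := fib2 (1 : Fq n) 1 z one_ne_zero
    have h2 : (Finset.univ.filter (fun b : Fq n => b ^ 2 + b = z)).card ≤ 2 := by simpa using this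
    have h3 : ((Finset.univ.filter (fun b : Fq n => b ^ 2 + b = z)).card : ℝ) ≤ 2 := by
      exact_mod_cast h2
    simp only [sgn, h, if_true]; linarith
  · have : Finset.univ.filter (fun b : Fq n => b ^ 2 + b = z) = ∅ := by
      rw [Finset.filter_eq_empty_iff]
      rintro b - rfl
      apply h
      rw [tr_add, tr_sq]
      exact CharTwo.add_self_eq_zero _
    rw [this]; simp [sgn, h]

lemma cube_count (hn : n ≠ 0) (hev : Even n) :
    3 * ((cubeSet n).card : ℝ) + 2 ≤ 2 ^ n + 2 * Real.sqrt (2 ^ n) := by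
  obtain ⟨w, hw1, hw3⟩ := exists_omega hn hev
  have hq : (Fintype.card (Fq n) : ℝ) = 2 ^ n := by rw [card_Fq hn]; push_cast; rfl
  have hw0 : w ≠ 0 := by rintro rfl; simp at hw3
  have up : ((∑ b : Fq n, (Finset.univ.filter (fun y : Fq n => y ^ 3 = b ^ 2 + b)).card : ℕ) : ℝ)
      ≤ 2 ^ n + 2 * Real.sqrt (2 ^ n) := by
    have e1 : ∑ b : Fq n, (Finset.univ.filter (fun y : Fq n => y ^ 3 = b ^ 2 + b)).card
        = ∑ y : Fq n, (Finset.univ.filter (fun b : Fq n => b ^ 2 + b = y ^ 3)).card := by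
      simp_rw [Finset.card_filter]
      rw [Finset.sum_comm]
      simp_rw [eq_comm]
    rw [e1]
    push_cast
    refine (Finset.sum_le_sum (fun y _ => fib_tr (y ^ 3))).trans ?_
    rw [Finset.sum_add_distrib]
    have h1 : ∑ y : Fq n, sgn (tr (y ^ 3)) ≤ 2 * Real.sqrt (2 ^ n) := by
      have := cs_cube_sq (n := n)
      rw [hq] at this
      refine (le_abs_self _).trans ((Real.abs_le_sqrt this).trans ?_)
      rw [Real.sqrt_mul (by norm_num), show (4:ℝ) = 2 ^ 2 by norm_num,
        Real.sqrt_sq (by norm_num)]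
    simp only [Finset.sum_const, Finset.card_univ, nsmul_eq_mul, hq]
    linarith
  have low : 3 * (cubeSet n).card + 2 ≤
      ∑ b : Fq n, (Finset.univ.filter (fun y : Fq n => y ^ 3 = b ^ 2 + b)).card := by
    have e : 3 * (cubeSet n).card + 2 = ∑ b : Fq n, ((if b ∈ cubeSet n then 3 else 0) +
        ((if b = 0 then 1 else 0) + (if b = 1 then 1 else 0))) := by
      rw [Finset.sum_add_distrib, Finset.sum_add_distrib]
      simp [mul_comm]
    rw [e]
    refine Finset.sum_le_sum (fun b _ => ?_)
    by_cases hb : b ∈ cubeSet n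
    · have hb' := hb
      simp only [cubeSet, Finset.mem_filter, Finset.mem_univ, true_and] at hb'
      obtain ⟨hb0, y, hy⟩ := hb'
      have b0 : b ≠ 0 := by rintro rfl; simp at hb0
      have b1 : b ≠ 1 := by
        rintro rfl; apply hb0; linear_combination two_zero (n := n)
      have y0 : y ≠ 0 := by rintro rfl; exact hb0 (by rw [← hy]; ring)
      have hs : ({y, w * y, w ^ 2 * y} : Finset (Fq n)) ⊆
          Finset.univ.filter (fun y : Fq n => y ^ 3 = b ^ 2 + b) := by
        intro z hz
        simp only [Finset.mem_insert, Finset.mem_singleton] at hz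
        simp only [Finset.mem_filter, Finset.mem_univ, true_and]
        rcases hz with rfl | rfl | rfl
        · exact hy
        · rw [mul_pow, hw3, one_mul, hy]
        · rw [mul_pow, ← pow_mul, mul_comm 2 3, pow_mul, hw3, one_pow, one_mul, hy]
      have hc : ({y, w * y, w ^ 2 * y} : Finset (Fq n)).card = 3 := by
        rw [Finset.card_eq_three]
        refine ⟨_, _, _, ?_, ?_, ?_, rfl⟩
        · intro h
          exact hw1 (mul_right_cancel₀ y0 (by rw [one_mul]; exact h.symm))
        · intro h
          have : w ^ 2 = 1 := mul_right_cancel₀ y0 (by rw [one_mul]; exact h.symm)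
          apply hw1
          calc w = w ^ 3 := by rw [pow_succ, this, one_mul]
            _ = 1 := hw3
        · intro h
          have h2 : w = w ^ 2 := mul_right_cancel₀ y0 h
          apply hw1
          apply mul_left_cancel₀ hw0
          rw [mul_one, ← sq]; exact h2.symm
      simp only [hb, b0, b1, if_true, if_false]
      have := Finset.card_le_card hs
      omega
    · simp only [hb, if_false]
      by_cases h0 : b = 0
      · subst h0
        simp only [if_true, zero_ne_one, if_false]
        exact Finset.card_pos.mpr ⟨0, by simp⟩
      · by_cases h1 : b = 1
        · subst h1
          simp only [if_true, one_ne_zero, if_false]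
          refine Finset.card_pos.mpr ⟨0, ?_⟩
          simp only [Finset.mem_filter, Finset.mem_univ, true_and]
          linear_combination - two_zero (n := n)
        · simp [h0, h1]
  have low' : (3 * ((cubeSet n).card : ℝ) + 2) ≤
     ((∑ b : Fq n, (Finset.univ.filter (fun y : Fq n => y ^ 3 = b ^ 2 + b)).card : ℕ) : ℝ) := by
    exact_mod_cast low
  linarith

lemma der_add (f g : Fq n → ZMod 2) (a : Fq n) :
    der (fun x => f x + g x) a = fun x => der f a x + der g a x := by
  funext x; simp only [der]; ring

lemma der4' (g : Fq n → ZMod 2) (hg : degLE g 3) (a b c d x : Fq n) :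
    der (der (der (der (fun x => tr (x ^ 15) + g x) a) b) c) d x = tr (moore a b c d) := by
  have h := congrFun (hg [d, c, b, a] rfl) x
  simp only [derIter] at h
  rw [der_add, der_add, der_add, der_add]
  simp only [h, add_zero]
  exact der4 a b c d x

lemma inner_sq (g : Fq n → ZMod 2) (hg : degLE g 3) (a b : Fq n) (ha : a ≠ 0) (k : ℕ)
    (hk : (Finset.univ.filter
      (fun c => ∀ x, tr (a ^ 15 * moore 1 (b / a) c x) = 0)).card ≤ k) :
    cs (der (der (fun x => tr (x ^ 15) + g x) a) b) ^ 2 ≤ k * Fintype.card (Fq n) := by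
  set K := (Finset.univ.filter (fun c => ∀ x, tr (a ^ 15 * moore 1 (b / a) c x) = 0)) with hK
  have h1 := cs_sq_le (der (der (fun x => tr (x ^ 15) + g x) a) b) (K.image (fun c => a * c)) ?_
  · refine h1.trans ?_
    have : ((K.image (fun c => a * c)).card : ℝ) ≤ k := by
      exact_mod_cast Finset.card_image_le.trans hk
    gcongr
  · intro c hc
    have h2 : c / a ∉ K := fun h => hc (Finset.mem_image.mpr ⟨_, h, by field_simp⟩)
    simp only [hK, Finset.mem_filter, Finset.mem_univ, true_and, not_forall] at h2
    obtain ⟨x, hx⟩ := h2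
    have h01 : ∀ a : ZMod 2, a ≠ 0 → a = 1 := by decide
    refine cs_zero _ (a * x) (fun y => ?_)
    rw [der4' g hg, ← h01 _ hx, ← moore_scale]
    congr 2 <;> field_simp

lemma inner_abs (hn : n ≠ 0) (g : Fq n → ZMod 2) (hg : degLE g 3) (a b : Fq n) (ha : a ≠ 0)
    (hb0 : b ≠ 0) (hba : b ≠ a) :
    |cs (der (der (fun x => tr (x ^ 15) + g x) a) b)| ≤
      Real.sqrt (2 ^ n) * (4 + if b / a ∈ cubeSet n then 4 else 0) := by
  have hq : (Fintype.card (Fq n) : ℝ) = 2 ^ n := by rw [card_Fq hn]; push_cast; rfl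
  have hB : (b / a) ^ 2 + b / a ≠ 0 := by
    intro h
    have h1 : (b / a) * (b / a + 1) = 0 := by rw [← h]; ring
    rcases mul_eq_zero.mp h1 with h | h
    · exact (div_ne_zero hb0 ha) h
    · have : b / a = 1 := by linear_combination h - two_zero (n := n)
      exact hba ((div_eq_one_iff_eq ha).mp this)
  have hm : a ^ 15 ≠ 0 := pow_ne_zero _ ha
  split_ifs with hc
  · have := inner_sq g hg a b ha 64 (ker_count64 _ _ hm hB)
    rw [hq] at this
    refine (Real.abs_le_sqrt this).trans (le_of_eq ?_)
    push_cast
    rw [Real.sqrt_mul (by norm_num), show (64:ℝ) = 8 ^ 2 by norm_num,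
        Real.sqrt_sq (by norm_num)]
    ring
  · have := inner_sq g hg a b ha 16 (ker_count16 _ _ hm hB ?_)
    · rw [hq] at this
      refine (Real.abs_le_sqrt this).trans (le_of_eq ?_)
      push_cast
      rw [Real.sqrt_mul (by norm_num), show (16:ℝ) = 4 ^ 2 by norm_num,
        Real.sqrt_sq (by norm_num)]
      ring
    · rintro ⟨y, hy⟩
      apply hc
      simp only [cubeSet, Finset.mem_filter, Finset.mem_univ, true_and]
      refine ⟨hB, y / a ^ 5, ?_⟩
      rw [div_pow, hy, ← pow_mul]
      exact mul_div_cancel_left₀ _ hm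

lemma mid_sq (hn : n ≠ 0) (hev : Even n) (g : Fq n → ZMod 2) (hg : degLE g 3) (a : Fq n)
    (ha : a ≠ 0) (s : ℝ) (hs : s = Real.sqrt (2 ^ n)) :
    cs (der (fun x => tr (x ^ 15) + g x) a) ^ 2 ≤
      (16 / 3) * s ^ 3 + (14 / 3) * s ^ 2 - (32 / 3) * s := by
  have hs0 : 0 ≤ s := hs ▸ Real.sqrt_nonneg _
  have hs2 : s ^ 2 = 2 ^ n := by rw [hs, Real.sq_sqrt (by positivity)]
  have hq : (Fintype.card (Fq n) : ℝ) = s ^ 2 := by rw [card_Fq hn, hs2]; push_cast; rfl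
  set h := (fun x : Fq n => tr (x ^ 15) + g x) with hh
  have hN := cube_count hn hev
  rw [← hs, ← hs2] at hN
  rw [cs_sq]
  have hle : ∀ b, cs (der (der h a) b) ≤ s * (4 + if b / a ∈ cubeSet n then 4 else 0)
      + ((if b = 0 then s ^ 2 - 4 * s else 0) + (if b = a then s ^ 2 - 4 * s else 0)) := by
    intro b
    by_cases hb0 : b = 0
    · subst hb0
      have h1 := (le_abs_self _).trans (cs_abs_le (der (der h a) 0))
      rw [hq] at h1
      have h2 : (0 : Fq n) / a ∉ cubeSet n := by simp [cubeSet]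
      simp only [h2, if_false, if_true, ha.symm]
      linarith
    · by_cases hba : b = a
      · subst hba
        have h1 := (le_abs_self _).trans (cs_abs_le (der (der h b) b))
        rw [hq] at h1
        have h2 : b / b ∉ cubeSet n := by
          rw [div_self ha]
          simp only [cubeSet, Finset.mem_filter, not_and]
          intro _ h
          exfalso; apply h
          linear_combination two_zero (n := n)
        simp only [h2, if_false, if_true, ha]
        linarith
      · have h1 := (le_abs_self _).trans (inner_abs hn g hg a b ha hb0 hba)
        rw [← hs] at h1
        simp only [hb0, hba, if_false, add_zero]
        exact h1
  refine (Finset.sum_le_sum (fun b _ => hle b)).trans ?_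
  have hcnt : ∑ b : Fq n, (if b / a ∈ cubeSet n then (4:ℝ) else 0) = 4 * (cubeSet n).card := by
    have h1 : ∑ b : Fq n, (if b / a ∈ cubeSet n then (4:ℝ) else 0)
        = ∑ b : Fq n, (if b ∈ cubeSet n then (4:ℝ) else 0) :=
      Equiv.sum_comp (Equiv.divRight₀ a ha) (fun b => if b ∈ cubeSet n then (4:ℝ) else 0)
    rw [h1]
    simp [mul_comm]
  rw [Finset.sum_add_distrib, Finset.sum_add_distrib, ← Finset.mul_sum, Finset.sum_add_distrib,
    hcnt]
  simp only [Finset.sum_const, Finset.card_univ, nsmul_eq_mul, hq, Finset.sum_ite_eq',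
    Finset.mem_univ, if_true]
  have := mul_le_mul_of_nonneg_left hN hs0
  nlinarith [this]

lemma top_sq (hn : n ≠ 0) (hev : Even n) (g : Fq n → ZMod 2) (hg : degLE g 3)
    (s : ℝ) (hs : s = Real.sqrt (2 ^ n)) :
    cs (fun x => tr (x ^ 15) + g x) ^ 2 ≤
      (2 ^ n - 1) * Real.sqrt ((16 / 3) * s ^ 3 + (14 / 3) * s ^ 2 - (32 / 3) * s) + 2 ^ n := by
  have hq : (Fintype.card (Fq n) : ℝ) = 2 ^ n := by rw [card_Fq hn]; push_cast; rfl
  rw [cs_sq, ← Finset.add_sum_erase _ _ (Finset.mem_univ (0 : Fq n))]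
  have h0 := (le_abs_self _).trans (cs_abs_le (der (fun x : Fq n => tr (x ^ 15) + g x) 0))
  rw [hq] at h0
  have h1 := Finset.sum_le_card_nsmul (Finset.univ.erase (0 : Fq n))
    (fun a => cs (der (fun x => tr (x ^ 15) + g x) a))
    (Real.sqrt ((16 / 3) * s ^ 3 + (14 / 3) * s ^ 2 - (32 / 3) * s))
    (fun a ha => (le_abs_self _).trans
      (Real.abs_le_sqrt (mid_sq hn hev g hg a (Finset.ne_of_mem_erase ha) s hs)))
  have hc : ((Finset.univ.erase (0 : Fq n)).card : ℝ) = 2 ^ n - 1 := by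
    rw [Finset.cast_card_erase_of_mem (Finset.mem_univ _), Finset.card_univ, hq]
  rw [nsmul_eq_mul, hc] at h1
  linarith

lemma cs_hdist (hn : n ≠ 0) (f g : Fq n → ZMod 2) :
    cs (fun x => f x + g x) = 2 ^ n - 2 * (hdist f g : ℝ) := by
  have hq : (Fintype.card (Fq n) : ℝ) = 2 ^ n := by rw [card_Fq hn]; push_cast; rfl
  have h1 : hdist f g = (Finset.univ.filter (fun x => f x ≠ g x)).card := by
    unfold hdist
    rw [← Set.ncard_coe_finset]; congr 1; ext x; simp
  have h2 : ∀ x, sgn (f x + g x) = 1 - 2 * (if f x ≠ g x then 1 else 0) := by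
    intro x
    have : f x + g x = 0 ↔ f x = g x := CharTwo.add_eq_zero
    unfold sgn
    by_cases h : f x = g x
    · simp [h, CharTwo.add_self_eq_zero]
    · have h' : ¬ (f x + g x = 0) := fun e => h (this.mp e)
      simp only [h', h, if_false, ne_eq, not_false_eq_true, if_true]; norm_num
  unfold cs
  simp_rw [h2]
  rw [Finset.sum_sub_distrib, ← Finset.mul_sum, h1, Finset.card_filter]
  push_cast
  simp [hq]

end helpers

/-- Third-order nonlinearity lower bound for `tr(x^15)`, even `n ≥ 6`. -/
theorem third_order_nl_tr_x15_even (n : ℕ) (hn : 6 ≤ n) (hev : Even n)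
    (f : Fq n → ZMod 2) (hf : ∀ x, f x = tr (x ^ 15)) :
    (nl 3 f : ℝ) ≥ (2:ℝ) ^ ((n:ℝ) - 1) - (1/2) * Real.sqrt
      (((2:ℝ) ^ (n:ℝ) - 1) * Real.sqrt
        ((1/3) * (2:ℝ) ^ (3 * (n:ℝ) / 2 + 4) + (7/3) * (2:ℝ) ^ ((n:ℝ) + 1)
          - (1/3) * (2:ℝ) ^ ((n:ℝ) / 2 + 5)) + (2:ℝ) ^ (n:ℝ)) := by
  have hn0 : n ≠ 0 := by omega
  have hmem : nl 3 f ∈ {d : ℕ | ∃ g : Fq n → ZMod 2, degLE g 3 ∧ d = hdist f g} := by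
    refine Nat.sInf_mem ⟨hdist f (fun _ => 0), fun _ => 0, ?_, rfl⟩
    intro l _
    induction l with
    | nil => rfl
    | cons a l ih =>
      by_cases hl : l = []
      · subst hl; funext x; simp [derIter, der]
      · clear ih
        have : ∀ l : List (Fq n), derIter (fun _ : Fq n => (0 : ZMod 2)) l = fun _ => 0 := by
          intro l
          induction l with
          | nil => rfl
          | cons a l ih => funext x; simp [derIter, der, ih]
        exact this _
  obtain ⟨g, hg, hd⟩ := hmem
  have hfe : f = fun x => tr (x ^ 15) := funext hf
  set s := Real.sqrt (2 ^ n) with hs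
  have htop := top_sq hn0 hev g hg s hs
  have hcs := cs_hdist hn0 f g
  rw [← hd] at hcs
  rw [hfe] at hcs ⊢
  rw [hcs] at htop
  have hhalf : (2:ℝ) ^ ((n:ℝ) / 2) = s := by
    rw [hs, Real.sqrt_eq_rpow, ← Real.rpow_natCast, ← Real.rpow_mul (by norm_num)]
    congr 1; ring
  have hpn : (2:ℝ) ^ (n:ℝ) = 2 ^ n := Real.rpow_natCast _ _
  have hs2 : s ^ 2 = 2 ^ n := by rw [hs, Real.sq_sqrt (by positivity)]
  have e1 : (2:ℝ) ^ (3 * (n:ℝ) / 2 + 4) = 16 * s ^ 3 := by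
    rw [Real.rpow_add (by norm_num), ← hhalf, ← Real.rpow_natCast ((2:ℝ) ^ ((n:ℝ) / 2)),
      ← Real.rpow_mul (by norm_num)]
    rw [show (n:ℝ) / 2 * ((3:ℕ):ℝ) = 3 * (n:ℝ) / 2 by push_cast; ring]
    norm_num [mul_comm]
  have e2 : (2:ℝ) ^ ((n:ℝ) + 1) = 2 * s ^ 2 := by
    rw [Real.rpow_add (by norm_num), hpn, hs2]; norm_num [mul_comm]
  have e3 : (2:ℝ) ^ ((n:ℝ) / 2 + 5) = 32 * s := by
    rw [Real.rpow_add (by norm_num), hhalf]; norm_num [mul_comm]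
  have e4 : (2:ℝ) ^ ((n:ℝ) - 1) = 2 ^ n / 2 := by
    rw [Real.rpow_sub (by norm_num), hpn]; norm_num
  rw [e1, e2, e3, e4, hpn]
  have e5 : (1/3) * (16 * s ^ 3) + (7/3) * (2 * s ^ 2) - (1/3) * (32 * s)
    = (16 / 3) * s ^ 3 + (14 / 3) * s ^ 2 - (32 / 3) * s := by ring
  rw [e5]
  have h := (le_abs_self _).trans (Real.abs_le_sqrt htop)
  linarith
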